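/- arXiv:1710.07234 — 2 statements merged into one kernel-verified Lean document; each statement's English description precedes it below -/
import Mathlib

section
/- Let N be a positive integer, let Q : Fin N → Fin N → ℕ be a matrix of queue lengths, and let σ_r and σ_g be two permutations of Fin N (the red and green matchings). Define the merge permutation σ = σ_g⁻¹ ∘ σ_r. Then there exists a permutation S of Fin N such that (i) on each orbit C of σ, S agrees with σ_r on all of C if Σ_{i∈C} Q i (σ_r i) ≥ Σ_{i∈C} Q i (σ_g i), and agrees with σ_g on all of C otherwise (in particular S i ∈ {σ_r i, σ_g i} for every i), and (ii) Σ_i Q i (S i) ≥ max(Σ_i Q i (σ_r i), Σ_i Q i (σ_g i)). In other words, the per-cycle cherry-picking of the heavier sub-matching in SERENA's MERGE procedure yields a valid full matching whose weight is at least the weight of each of the two input matchings. -/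
open Finset

/-!
Write `σ = σg⁻¹ ∘ σr`. Let `τ` act as `σ` on the `σ`-cycles whose red weight is at least their green
weight and as the identity on the others. These cycles form a `σ`-invariant set, so `τ` is a
permutation and `σg ∘ τ` is a matching; it agrees with `σg ∘ σ = σr` on the chosen cycles and with
`σg` elsewhere. The merged weight of a cycle is thus the maximum of its red and green weights, and
summing over the cycles gives the bound.
-/

theorem sum_le_sum_of_sum_class_le {α M : Type*} [Fintype α] [AddCommMonoid M] [Preorder M]
    [AddLeftMono M] (r : Setoid α) [DecidableRel r] {f g : α → M}
    (h : ∀ i, ∑ j with r i j, f j ≤ ∑ j with r i j, g j) : ∑ i, f i ≤ ∑ i, g i := by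
  classical
  rw [← sum_fiberwise univ (Quotient.mk r) f, ← sum_fiberwise univ (Quotient.mk r) g]
  refine sum_le_sum fun c _ => ?_
  induction c using Quotient.inductionOn with
  | h i => simpa only [Quotient.eq, r.comm'] using h i

section CycleSums

variable {α M : Type*} [Fintype α] [DecidableEq α] [AddCommMonoid M] {σ : Equiv.Perm α}

/-- The sum of `f` over the cycle of `σ` through `i`; fixed points count as cycles of length one. -/
def cycleSum (σ : Equiv.Perm α) (f : α → M) (i : α) : M :=
  ∑ j with σ.SameCycle i j, f j

theorem cycleSum_congr {f g : α → M} {i : α} (h : ∀ j, σ.SameCycle i j → f j = g j) :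
    cycleSum σ f i = cycleSum σ g i :=
  sum_congr rfl fun j hj => h j (mem_filter_univ j |>.mp hj)

theorem cycleSum_eq_of_sameCycle (f : α → M) {i j : α} (h : σ.SameCycle i j) :
    cycleSum σ f i = cycleSum σ f j := by
  have same_class (k : α) : σ.SameCycle i k ↔ σ.SameCycle j k := ⟨h.symm.trans, h.trans⟩
  simp only [cycleSum, same_class]

theorem sum_le_sum_of_cycleSum_le [Preorder M] [AddLeftMono M] {f g : α → M}
    (h : ∀ i, cycleSum σ f i ≤ cycleSum σ g i) : ∑ i, f i ≤ ∑ i, g i :=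
  letI : DecidableRel (Equiv.Perm.SameCycle.setoid σ) :=
    inferInstanceAs (DecidableRel σ.SameCycle)
  sum_le_sum_of_sum_class_le (Equiv.Perm.SameCycle.setoid σ) h

end CycleSums

section MergeOn

variable {α β : Type*} {σr σg : α ≃ β} {p : α → Prop} [DecidablePred p]

/-- The merge permutation `σg⁻¹ ∘ σr` of two matchings, allowing the inputs and the outputs to be
of different types. -/
def mergePerm (σr σg : α ≃ β) : Equiv.Perm α :=
  σr.trans σg.symm

/-- The matching that follows `σr` on an invariant set `p` of the merge permutation and `σg` off
it, encoded as `σg` precomposed with the merge permutation restricted to `p`. -/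
def mergeOn (σr σg : α ≃ β) (p : α → Prop) [DecidablePred p]
    (hp : ∀ i, p (mergePerm σr σg i) ↔ p i) : α ≃ β :=
  (Equiv.Perm.ofSubtype ((mergePerm σr σg).subtypePerm hp)).trans σg

theorem mergeOn_apply_of_pos (hp : ∀ i, p (mergePerm σr σg i) ↔ p i) {i : α} (hi : p i) :
    mergeOn σr σg p hp i = σr i := by
  simp [mergeOn, mergePerm, Equiv.Perm.ofSubtype_apply_of_mem _ hi]

theorem mergeOn_apply_of_neg (hp : ∀ i, p (mergePerm σr σg i) ↔ p i) {i : α} (hi : ¬p i) :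
    mergeOn σr σg p hp i = σg i := by
  simp [mergeOn, Equiv.Perm.ofSubtype_apply_of_not_mem _ hi]

end MergeOn

section Merge

variable {α β M : Type*} [Fintype α] [DecidableEq α] [AddCommMonoid M]
  {Q : α → β → M} {σr σg : α ≃ β} {i j : α}

/-- The weight in the matching `π` of the cycle through `i` of the merge permutation of `σr` and
`σg`; the red and green weights of the cycle are the cases `π = σr` and `π = σg`. -/
def cycleWeight (Q : α → β → M) (σr σg π : α ≃ β) (i : α) : M :=
  cycleSum (mergePerm σr σg) (fun j => Q j (π j)) i

theorem cycleWeight_le_iff_of_sameCycle [LE M] {π ρ : α ≃ β}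
    (h : (mergePerm σr σg).SameCycle i j) :
    cycleWeight Q σr σg π i ≤ cycleWeight Q σr σg ρ i ↔
      cycleWeight Q σr σg π j ≤ cycleWeight Q σr σg ρ j := by
  simp only [cycleWeight, cycleSum_eq_of_sameCycle _ h]

variable [LinearOrder M]

/-- SERENA's merge of `σr` and `σg`: the heavier of the two on each cycle of the merge permutation,
ties going to `σr`. -/
def serenaMerge (Q : α → β → M) (σr σg : α ≃ β) : α ≃ β :=
  mergeOn σr σg (fun i => cycleWeight Q σr σg σg i ≤ cycleWeight Q σr σg σr i) fun i =>
    cycleWeight_le_iff_of_sameCycle (Equiv.Perm.sameCycle_apply_left.mpr (.refl _ i))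

theorem serenaMerge_apply_of_le (hi : cycleWeight Q σr σg σg i ≤ cycleWeight Q σr σg σr i)
    (h : (mergePerm σr σg).SameCycle i j) : serenaMerge Q σr σg j = σr j :=
  mergeOn_apply_of_pos _ ((cycleWeight_le_iff_of_sameCycle h).mp hi)

theorem serenaMerge_apply_of_lt (hi : cycleWeight Q σr σg σr i < cycleWeight Q σr σg σg i)
    (h : (mergePerm σr σg).SameCycle i j) : serenaMerge Q σr σg j = σg j :=
  mergeOn_apply_of_neg _ ((cycleWeight_le_iff_of_sameCycle h).not.mp hi.not_ge)

theorem serenaMerge_apply_eq_or_eq (Q : α → β → M) (σr σg : α ≃ β) (i : α) :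
    serenaMerge Q σr σg i = σr i ∨ serenaMerge Q σr σg i = σg i :=
  (le_or_gt (cycleWeight Q σr σg σg i) (cycleWeight Q σr σg σr i)).imp
    (serenaMerge_apply_of_le · (.refl _ i)) (serenaMerge_apply_of_lt · (.refl _ i))

theorem cycleWeight_serenaMerge (Q : α → β → M) (σr σg : α ≃ β) (i : α) :
    cycleWeight Q σr σg (serenaMerge Q σr σg) i =
      max (cycleWeight Q σr σg σr i) (cycleWeight Q σr σg σg i) := by
  rcases le_or_gt (cycleWeight Q σr σg σg i) (cycleWeight Q σr σg σr i) with hi | hi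
  · rw [max_eq_left hi]
    exact cycleSum_congr fun j h => by rw [serenaMerge_apply_of_le hi h]
  · rw [max_eq_right hi.le]
    exact cycleSum_congr fun j h => by rw [serenaMerge_apply_of_lt hi h]

theorem max_weight_le_weight_serenaMerge [AddLeftMono M] (Q : α → β → M) (σr σg : α ≃ β) :
    max (∑ i, Q i (σr i)) (∑ i, Q i (σg i)) ≤ ∑ i, Q i (serenaMerge Q σr σg i) :=
  max_le
    (sum_le_sum_of_cycleSum_le fun i =>
      (le_max_left _ _).trans_eq (cycleWeight_serenaMerge Q σr σg i).symm)
    (sum_le_sum_of_cycleSum_le fun i =>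
      (le_max_right _ _).trans_eq (cycleWeight_serenaMerge Q σr σg i).symm)

end Merge

theorem serena_merge_exists_general {α β M : Type*} [Fintype α] [DecidableEq α] [AddCommMonoid M]
    [LinearOrder M] [AddLeftMono M] (Q : α → β → M) (σr σg : α ≃ β) (σ : Equiv.Perm α)
    (hσ : σ = σr.trans σg.symm) :
    ∃ S : α ≃ β,
      (∀ i : α,
        (∑ j with σ.SameCycle i j, Q j (σr j) ≥ ∑ j with σ.SameCycle i j, Q j (σg j) →
          ∀ j : α, σ.SameCycle i j → S j = σr j) ∧
        (∑ j with σ.SameCycle i j, Q j (σr j) < ∑ j with σ.SameCycle i j, Q j (σg j) →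
          ∀ j : α, σ.SameCycle i j → S j = σg j)) ∧
      (∀ i : α, S i = σr i ∨ S i = σg i) ∧
      ∑ i, Q i (S i) ≥ max (∑ i, Q i (σr i)) (∑ i, Q i (σg i)) := by
  subst hσ
  exact ⟨serenaMerge Q σr σg,
    fun _ => ⟨fun hi _ => serenaMerge_apply_of_le hi, fun hi _ => serenaMerge_apply_of_lt hi⟩,
    serenaMerge_apply_eq_or_eq Q σr σg, max_weight_le_weight_serenaMerge Q σr σg⟩

/-- SERENA's MERGE: per-cycle cherry-picking of the heavier sub-matching yields a valid
full matching whose weight is at least that of each of the two input matchings. -/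
theorem serena_merge_exists
    (N : ℕ) (hN : 0 < N) (Q : Fin N → Fin N → ℕ)
    (σr σg : Equiv.Perm (Fin N)) (σ : Equiv.Perm (Fin N)) (hσ : σ = σg⁻¹ * σr) :
    ∃ S : Equiv.Perm (Fin N),
      (∀ i : Fin N,
        (∑ j ∈ Finset.univ.filter (fun j => σ.SameCycle i j), Q j (σr j) ≥
            ∑ j ∈ Finset.univ.filter (fun j => σ.SameCycle i j), Q j (σg j) →
          ∀ j : Fin N, σ.SameCycle i j → S j = σr j) ∧
        (∑ j ∈ Finset.univ.filter (fun j => σ.SameCycle i j), Q j (σr j) <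
            ∑ j ∈ Finset.univ.filter (fun j => σ.SameCycle i j), Q j (σg j) →
          ∀ j : Fin N, σ.SameCycle i j → S j = σg j)) ∧
      (∀ i : Fin N, S i = σr i ∨ S i = σg i) ∧
      (∑ i, Q i (S i) ≥ max (∑ i, Q i (σr i)) (∑ i, Q i (σg i))) :=
  serena_merge_exists_general Q σr σg σ hσ
end

section
/- Let N = 2^q with q ≥ 1, let σ be a permutation of Fin N, let i ∈ Fin N, and let l be the length of the cycle containing i. Then at least one of the following three situations occurs: (I) σ^(2^n)(i) = i for some nonnegative integer n ≤ q; (II) σ^(2^m)(i) = σ^(2^n)(i) for some nonnegative integers n < m ≤ q; (III) σ^(2^m)(i) = σ^(−2^n)(i) for some nonnegative integers n < m ≤ q — if and only if l is an ouroboros number with respect to N. In other words, a vertex can detect from its knowledge sets that it lies on an ouroboros cycle exactly when its cycle length is an ouroboros number. -/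
/-- A positive integer `l` is an ouroboros number with respect to `N` if it divides a
number of one of the forms `2^n` (with `0 ≤ n ≤ ⌈log₂ N⌉`), `2^m - 2^n`, or `2^m + 2^n`
(with `n < m ≤ ⌈log₂ N⌉`). -/
def IsOuroborosNumber (N l : ℕ) : Prop :=
  0 < l ∧
    ((∃ n : ℕ, n ≤ Nat.clog 2 N ∧ l ∣ 2 ^ n) ∨
     (∃ m n : ℕ, n < m ∧ m ≤ Nat.clog 2 N ∧ l ∣ 2 ^ m - 2 ^ n) ∨
     (∃ m n : ℕ, n < m ∧ m ≤ Nat.clog 2 N ∧ l ∣ 2 ^ m + 2 ^ n))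

section GroupAction

open MulAction

variable {G α : Type*} [Group G] [MulAction G α] {g : G} {x : α}

theorem zpow_smul_eq_zpow_smul_iff_period_dvd_sub {a b : ℤ} :
    g ^ a • x = g ^ b • x ↔ (period g x : ℤ) ∣ a - b := by
  rw [← zpow_smul_eq_iff_period_dvd, sub_eq_neg_add, zpow_add, zpow_neg, mul_smul,
    inv_smul_eq_iff]

theorem pow_smul_eq_pow_smul_iff_period_dvd_sub {a b : ℕ} (hba : b ≤ a) :
    g ^ a • x = g ^ b • x ↔ period g x ∣ a - b := by
  rw [← Int.natCast_dvd_natCast, Nat.cast_sub hba, ← zpow_smul_eq_zpow_smul_iff_period_dvd_sub,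
    zpow_natCast, zpow_natCast]

theorem pow_smul_eq_inv_pow_smul_iff_period_dvd_add {a b : ℕ} :
    g ^ a • x = g⁻¹ ^ b • x ↔ period g x ∣ a + b := by
  rw [← Int.natCast_dvd_natCast, Nat.cast_add, ← sub_neg_eq_add,
    ← zpow_smul_eq_zpow_smul_iff_period_dvd_sub, zpow_neg, zpow_natCast, zpow_natCast, inv_pow]

end GroupAction

theorem isOuroborosNumber_iff_dvd {N l : ℕ} :
    IsOuroborosNumber N l ↔
      (∃ n : ℕ, n ≤ Nat.clog 2 N ∧ l ∣ 2 ^ n) ∨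
      (∃ m n : ℕ, n < m ∧ m ≤ Nat.clog 2 N ∧ l ∣ 2 ^ m - 2 ^ n) ∨
      (∃ m n : ℕ, n < m ∧ m ≤ Nat.clog 2 N ∧ l ∣ 2 ^ m + 2 ^ n) := by
  refine and_iff_right_of_imp ?_
  rintro (⟨n, -, hl⟩ | ⟨m, n, hnm, -, hl⟩ | ⟨m, n, -, -, hl⟩)
  · exact Nat.pos_of_dvd_of_pos hl (by positivity)
  · exact Nat.pos_of_dvd_of_pos hl (Nat.sub_pos_of_lt (Nat.pow_lt_pow_right one_lt_two hnm))
  · exact Nat.pos_of_dvd_of_pos hl (by positivity)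

/-- If `x` has infinite orbit under `g`, then `MulAction.period g x = 0`, which divides no positive
number, so both sides are false. -/
theorem ideal_situation_iff_ouroboros_general {G α : Type*} [Group G] [MulAction G α]
    (N : ℕ) (g : G) (x : α) :
    ((∃ n : ℕ, n ≤ Nat.clog 2 N ∧ g ^ 2 ^ n • x = x) ∨
     (∃ m n : ℕ, n < m ∧ m ≤ Nat.clog 2 N ∧ g ^ 2 ^ m • x = g ^ 2 ^ n • x) ∨
     (∃ m n : ℕ, n < m ∧ m ≤ Nat.clog 2 N ∧ g ^ 2 ^ m • x = g⁻¹ ^ 2 ^ n • x)) ↔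
      IsOuroborosNumber N (MulAction.period g x) := by
  rw [isOuroborosNumber_iff_dvd]
  refine or_congr ?fixed (or_congr ?forward ?backward)
  case fixed => simp only [MulAction.pow_smul_eq_iff_period_dvd]
  case forward =>
    refine exists₂_congr fun m n ↦ and_congr_right fun hnm ↦ and_congr_right fun _ ↦ ?_
    exact pow_smul_eq_pow_smul_iff_period_dvd_sub (Nat.pow_le_pow_right two_pos hnm.le)
  case backward => simp only [pow_smul_eq_inv_pow_smul_iff_period_dvd_add]

/-- For `N = 2^q`, a vertex `i` detects (from its knowledge sets) one of the three ideal
situations if and only if the length of the cycle of `σ` containing `i` is an ouroboros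
number with respect to `N`. -/
theorem ideal_situation_iff_ouroboros
    (q : ℕ) (hq : 1 ≤ q) (N : ℕ) (hN : N = 2 ^ q)
    (σ : Equiv.Perm (Fin N)) (i : Fin N)
    (l : ℕ) (hl : l = Function.minimalPeriod σ i) :
    ((∃ n : ℕ, n ≤ q ∧ (σ ^ (2 ^ n)) i = i) ∨
     (∃ m n : ℕ, n < m ∧ m ≤ q ∧ (σ ^ (2 ^ m)) i = (σ ^ (2 ^ n)) i) ∨
     (∃ m n : ℕ, n < m ∧ m ≤ q ∧ (σ ^ (2 ^ m)) i = (σ⁻¹ ^ (2 ^ n)) i)) ↔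
      IsOuroborosNumber N l := by
  obtain rfl : Nat.clog 2 N = q := hN ▸ Nat.clog_pow 2 q one_lt_two
  exact hl ▸ ideal_situation_iff_ouroboros_general N σ i
end
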